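/- There exists a constant C > 0, depending only on d, such that for every ε ∈ (0,1), every n ≥ 1 and every symmetric ψ ∈ ΓL²_n with ‖(−L₀)^{1/2}ψ‖ < ∞, the bound ‖(−L₀)^{−1/2} A⁺_ε ψ‖ ≤ C √n ‖(−L₀)^{1/2} ψ‖ holds (this is the '+' case of the graded sector bound ‖(−L₀)^{−1/2} A^ε_σ ψ‖ ≤ C ‖√N (−L₀)^{1/2} ψ‖, since the number operator N acts on ΓL²_n as multiplication by n). -/

import Mathlib

open scoped BigOperators
open scoped Classical

noncomputable section

namespace SBE

/-- Lattice points of `ℤ^d`. -/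
abbrev ZLat (d : ℕ) := Fin d → ℤ

/-- Kernels of the `n`-th chaos: functions on `n`-tuples of lattice points. -/
abbrev Chaos (d n : ℕ) := (Fin n → ZLat d) → ℂ

/-- Squared Euclidean norm of a lattice point. -/
def nsq {d : ℕ} (k : ZLat d) : ℝ := ∑ i, ((k i : ℝ))^2

/-- Euclidean norm of a lattice point. -/
def eN {d : ℕ} (k : ZLat d) : ℝ := Real.sqrt (nsq k)

/-- Supremum norm of a lattice point. -/
def sN {d : ℕ} (k : ZLat d) : ℝ := ((Finset.univ.sup fun i => (k i).natAbs : ℕ) : ℝ)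

/-- The norm used in the Fourier cutoff: Euclidean if `d = 2`, supremum otherwise. -/
def cutNorm (d : ℕ) (k : ZLat d) : ℝ := if d = 2 then eN k else sN k

/-- `w · k`. -/
def dotw {d : ℕ} (w : Fin d → ℝ) (k : ZLat d) : ℝ := ∑ i, w i * (k i : ℝ)

/-- `|k_{1:n}|² = Σ_i |k_i|²`. -/
def wSq {d n : ℕ} (k : Fin n → ZLat d) : ℝ := ∑ a, nsq (k a)

/-- The coupling constant `λ_ε`. -/
def lam (d : ℕ) (ε : ℝ) : ℝ :=
  if d = 2 then (Real.sqrt (Real.log (1 / ε^2)))⁻¹ else ε ^ ((d:ℝ)/2 - 1)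

/-- The Fourier cutoff indicator `J^ε_{ℓ,m}`. -/
def Jind (d : ℕ) (ε : ℝ) (l m : ZLat d) : ℝ :=
  if 0 < ε * cutNorm d l ∧ ε * cutNorm d l ≤ 1 ∧
     0 < ε * cutNorm d m ∧ ε * cutNorm d m ≤ 1 ∧
     0 < ε * cutNorm d (l + m) ∧ ε * cutNorm d (l + m) ≤ 1 then 1 else 0

/-- Symmetry of a kernel under permutation of its arguments. -/
def Symm {d n : ℕ} (f : Chaos d n) : Prop :=
  ∀ (σ : Equiv.Perm (Fin n)) (k : Fin n → ZLat d), f (k ∘ σ) = f k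

/-- A kernel vanishes whenever one of its arguments is the zero frequency
(i.e. it is really a function on `(ℤ^d_0)^n`). -/
def SuppOk {d n : ℕ} (f : Chaos d n) : Prop :=
  ∀ k : Fin n → ZLat d, (∃ a, k a = 0) → f k = 0

/-- Summand of `‖(-L₀)^s f‖²`. -/
def sobTerm {d n : ℕ} (s : ℝ) (f : Chaos d n) (k : Fin n → ZLat d) : ℝ :=
  (wSq k / 2) ^ (2*s) * ‖f k‖^2

/-- `‖(-L₀)^s f‖² = n! Σ_k (|k_{1:n}|²/2)^{2s} |f(k)|²`. -/
def sobSq {d n : ℕ} (s : ℝ) (f : Chaos d n) : ℝ := (n.factorial : ℝ) * ∑' k, sobTerm s f k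

/-- Remove the entries `i < j` from an `(n+2)`-tuple (order preservingly). -/
def remove2 {X : Type*} {n : ℕ} (k : Fin (n+2) → X) (i j : Fin (n+2)) (h : i < j) :
    Fin n → X :=
  fun a => k (j.succAbove ((Fin.castLT i
    (Nat.lt_of_lt_of_le (Fin.lt_def.mp h) (Nat.lt_succ_iff.mp j.isLt))).succAbove a))

/-- The operator `A⁺_ε : ΓL²_{n+1} → ΓL²_{n+2}`. -/
def Aplus (d : ℕ) (w : Fin d → ℝ) (ε : ℝ) {n : ℕ} (f : Chaos d (n+1)) : Chaos d (n+2) :=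
  fun k => -(2 * Complex.I / (((2*Real.pi) ^ ((d:ℝ)/2) : ℝ) : ℂ)) *
      ((lam d ε / ((n:ℝ)+2) : ℝ) : ℂ) *
    ∑ i : Fin (n+2), ∑ j : Fin (n+2),
      if h : i < j then
        ((dotw w (k i + k j) : ℝ) : ℂ) * ((Jind d ε (k i) (k j) : ℝ) : ℂ) *
          f (Fin.cons (k i + k j) (remove2 k i j h))
      else 0

/-- The operator `A⁻_ε : ΓL²_{n+2} → ΓL²_{n+1}`. -/
def Aminus (d : ℕ) (w : Fin d → ℝ) (ε : ℝ) {n : ℕ} (f : Chaos d (n+2)) : Chaos d (n+1) :=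
  fun k => (2 * Complex.I / (((2*Real.pi) ^ ((d:ℝ)/2) : ℝ) : ℂ)) *
      ((((n:ℝ)+2) * lam d ε : ℝ) : ℂ) *
    ∑ j : Fin (n+1), ((dotw w (k j) : ℝ) : ℂ) *
      ∑' l : ZLat d, ((Jind d ε l (k j - l) : ℝ) : ℂ) *
        f (Fin.cons l (Fin.cons (k j - l) (fun a => k (j.succAbove a))))

/-!
Let `ψ` have `n + 1` arguments. Since `A⁺ψ(k)` is a sum over the pairs `i < j` of entries of `k`,
the Cauchy–Schwarz inequality with the weights `|k_i|² + |k_j|²` bounds `|A⁺ψ(k)|²` by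
`(n + 1) |k|²` times a sum of squares divided by the weights, and `(-L₀)⁻¹` cancels the factor
`|k|²`. Summing over `k` for a fixed pair, one first fixes the merged frequency `q = k_i + k_j` and
is left with `λ_ε² ∑_ℓ J_{ℓ,q-ℓ} / (|ℓ|² + |q-ℓ|²)`, which is at most `λ_ε² ∑ |ℓ|⁻²` over nonzero
`|ℓ| ≲ ε⁻¹`. This is bounded: the sum has order `log ε⁻²` for `d = 2` and `ε^{2-d}` for `d ≥ 3`.
What remains is `∑ |q|² |ψ(q, …)|²`, which by symmetry of `ψ` is `∑ |k|² |ψ(k)|² / (n + 1)`. All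
pairs obey the same bound, and their number, the normalisation of `A⁺` and the factorials combine to
a factor of order `n + 1`.
-/

section Box

open Finset

lemma sum_Icc_neg_eq_sum_box {α M : Type*} [Ring α] [PartialOrder α] [IsOrderedRing α]
    [LocallyFiniteOrder α] [DecidableEq α] [AddCommMonoid M] (f : α → M) (n : ℕ) :
    ∑ p ∈ Icc (-n : α) n, f p = ∑ k ∈ range (n + 1), ∑ p ∈ box k, f p := by
  induction n with
  | zero => simp
  | succ n ih =>
    rw [sum_range_succ, ← ih, ← Nat.succ_eq_add_one, ← box_succ_disjUnion, sum_disjUnion, add_comm]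

variable {ι : Type*} [Fintype ι] [DecidableEq ι]

lemma exists_natAbs_eq_of_mem_box_succ {k : ℕ} {p : ι → ℤ} (hp : p ∈ box (k + 1)) :
    ∃ i, (p i).natAbs = k + 1 := by
  rw [box_succ_eq_sdiff, mem_sdiff, mem_Icc, mem_Icc] at hp
  by_contra! hne
  refine hp.2 ⟨fun i => ?_, fun i => ?_⟩ <;>
  · have h₁ := hp.1.1 i
    have h₂ := hp.1.2 i
    have h₃ := hne i
    simp only [Pi.neg_apply, Pi.natCast_apply] at h₁ h₂ ⊢
    omega

lemma card_box_succ_le (k : ℕ) :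
    #(box (k + 1) : Finset (ι → ℤ)) ≤
      Fintype.card ι * (2 * (2 * k + 3) ^ (Fintype.card ι - 1)) := by
  let face (i : ι) : Finset (ι → ℤ) := Fintype.piFinset <|
    Function.update (fun _ => Icc (-(k + 1 : ℤ)) (k + 1)) i {-(k + 1 : ℤ), (k + 1 : ℤ)}
  have box_subset : box (k + 1) ⊆ univ.biUnion face := by
    intro p hp
    obtain ⟨i, hi⟩ := exists_natAbs_eq_of_mem_box_succ hp
    rw [box_succ_eq_sdiff, mem_sdiff, mem_Icc] at hp
    refine mem_biUnion.2 ⟨i, mem_univ i, Fintype.mem_piFinset.2 fun j => ?_⟩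
    obtain rfl | hj := eq_or_ne j i
    · rw [Function.update_self, mem_insert, mem_singleton]
      omega
    · rw [Function.update_of_ne hj, mem_Icc]
      exact ⟨by simpa using hp.1.1 j, by simpa using hp.1.2 j⟩
  have card_face (i : ι) : #(face i) ≤ 2 * (2 * k + 3) ^ (Fintype.card ι - 1) := by
    have card_side : #(Icc (-(k + 1 : ℤ)) (k + 1)) = 2 * k + 3 := by
      rw [Int.card_Icc]
      omega
    have card_others : ∀ j ∈ univ.erase i, #(Function.update (fun _ => Icc (-(k + 1 : ℤ)) (k + 1)) i
        {-(k + 1 : ℤ), (k + 1 : ℤ)} j) = 2 * k + 3 := fun j hj => by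
      rw [Function.update_of_ne (ne_of_mem_erase hj), card_side]
    rw [Fintype.card_piFinset, ← mul_prod_erase univ _ (mem_univ i), Function.update_self,
      prod_congr rfl card_others, prod_const, card_erase_of_mem (mem_univ i), card_univ]
    gcongr
    exact card_le_two
  exact (card_le_card box_subset).trans (card_biUnion_le_card_mul _ _ _ fun i _ => card_face i)

end Box

section Lattice

open Finset

variable {d : ℕ}

lemma nsq_nonneg (k : ZLat d) : 0 ≤ nsq k := sum_nonneg fun _ _ => sq_nonneg _

lemma nsq_zero : nsq (0 : ZLat d) = 0 := by simp [nsq]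

lemma sq_apply_le_nsq (k : ZLat d) (i : Fin d) : (k i : ℝ) ^ 2 ≤ nsq k :=
  single_le_sum (f := fun i => (k i : ℝ) ^ 2) (fun _ _ => sq_nonneg _) (mem_univ i)

lemma nsq_eq_intCast (k : ZLat d) : nsq k = ((∑ i, k i ^ 2 : ℤ) : ℝ) := by
  push_cast
  rfl

lemma nsq_pos {k : ZLat d} (hk : k ≠ 0) : 0 < nsq k := by
  obtain ⟨i, hi⟩ := Function.ne_iff.1 hk
  have : (k i : ℝ) ≠ 0 := Int.cast_ne_zero.2 hi
  exact (by positivity : 0 < (k i : ℝ) ^ 2).trans_le (sq_apply_le_nsq k i)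

-- `|l|² + |m|² + |l + m|²` is even, so the three squared norms cannot all equal one.
lemma two_le_nsq_or {l m : ZLat d} (hl : l ≠ 0) (hm : m ≠ 0) (hlm : l + m ≠ 0) :
    2 ≤ nsq l ∨ 2 ≤ nsq m ∨ 2 ≤ nsq (l + m) := by
  have parity : ∑ i, (l + m) i ^ 2 = ∑ i, l i ^ 2 + ∑ i, m i ^ 2 + 2 * ∑ i, l i * m i := by
    rw [mul_sum, ← sum_add_distrib, ← sum_add_distrib]
    exact sum_congr rfl fun i _ => by rw [Pi.add_apply]; ring
  have hl' := nsq_pos hl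
  have hm' := nsq_pos hm
  have hlm' := nsq_pos hlm
  rw [nsq_eq_intCast] at hl' hm' hlm' ⊢
  rw [nsq_eq_intCast m, nsq_eq_intCast (l + m)]
  norm_cast at hl' hm' hlm' ⊢
  omega

lemma dotw_sq_le (w : Fin d → ℝ) (k : ZLat d) : dotw w k ^ 2 ≤ ‖WithLp.toLp 2 w‖ ^ 2 * nsq k := by
  rw [EuclideanSpace.real_norm_sq_eq]
  exact sum_mul_sq_le_sq_mul_sq _ _ _

lemma sum_Icc_inv_nsq_le (d n : ℕ) :
    ∑ p ∈ Icc (-n : ZLat d) n, (nsq p)⁻¹ ≤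
      2 * d * 3 ^ (d - 1) * ∑ k ∈ range n, ((k : ℝ) + 1) ^ (d - 1) / ((k : ℝ) + 1) ^ 2 := by
  have inv_nsq_le {k : ℕ} {p : ZLat d} (hp : p ∈ box (k + 1)) :
      (nsq p)⁻¹ ≤ (((k : ℝ) + 1) ^ 2)⁻¹ := by
    obtain ⟨i, hi⟩ := exists_natAbs_eq_of_mem_box_succ hp
    have sq_apply : (p i : ℝ) ^ 2 = ((k : ℝ) + 1) ^ 2 := by
      rw [← sq_abs, ← Int.cast_abs, Int.abs_eq_natAbs, hi]
      norm_cast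
    exact inv_anti₀ (by positivity) (sq_apply ▸ sq_apply_le_nsq p i)
  have card_le (k : ℕ) :
      (#(box (k + 1) : Finset (ZLat d)) : ℝ) ≤ d * (2 * (3 * ((k : ℝ) + 1)) ^ (d - 1)) := by
    calc (#(box (k + 1) : Finset (ZLat d)) : ℝ) ≤ d * (2 * (2 * (k : ℝ) + 3) ^ (d - 1)) := by
          exact_mod_cast Fintype.card_fin d ▸ card_box_succ_le (ι := Fin d) k
      _ ≤ d * (2 * (3 * ((k : ℝ) + 1)) ^ (d - 1)) := by
          gcongr
          linarith [k.cast_nonneg (α := ℝ)]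
  calc ∑ p ∈ Icc (-n : ZLat d) n, (nsq p)⁻¹
      = ∑ k ∈ range n, ∑ p ∈ box (k + 1), (nsq p)⁻¹ := by
        rw [sum_Icc_neg_eq_sum_box, sum_range_succ', box_zero, sum_singleton, nsq_zero, inv_zero,
          add_zero]
    _ ≤ ∑ k ∈ range n, d * (2 * (3 * ((k : ℝ) + 1)) ^ (d - 1)) * (((k : ℝ) + 1) ^ 2)⁻¹ := by
        gcongr with k
        refine (sum_le_card_nsmul _ _ _ fun p => inv_nsq_le).trans ?_
        rw [nsmul_eq_mul]
        gcongr
        exact card_le k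
    _ = 2 * d * 3 ^ (d - 1) * ∑ k ∈ range n, ((k : ℝ) + 1) ^ (d - 1) / ((k : ℝ) + 1) ^ 2 := by
        rw [mul_sum]
        exact sum_congr rfl fun k _ => by rw [mul_pow]; ring

end Lattice

section Cutoff

variable {d : ℕ} {ε : ℝ} {l m : ZLat d}

lemma cutNorm_zero : cutNorm d 0 = 0 := by simp [cutNorm, eN, sN, nsq_zero]

lemma abs_apply_le_cutNorm (l : ZLat d) (i : Fin d) : |(l i : ℝ)| ≤ cutNorm d l := by
  unfold cutNorm eN sN
  split_ifs
  · exact Real.abs_le_sqrt (sq_apply_le_nsq l i)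
  · rw [← Int.cast_abs, Int.abs_eq_natAbs, Int.cast_natCast]
    exact_mod_cast Finset.le_sup (f := fun i => (l i).natAbs) (Finset.mem_univ i)

lemma Jind_nonneg (d : ℕ) (ε : ℝ) (l m : ZLat d) : 0 ≤ Jind d ε l m := by
  unfold Jind; split_ifs <;> norm_num

lemma Jind_le_one (d : ℕ) (ε : ℝ) (l m : ZLat d) : Jind d ε l m ≤ 1 := by
  unfold Jind; split_ifs <;> norm_num

lemma Jind_sq (d : ℕ) (ε : ℝ) (l m : ZLat d) : Jind d ε l m ^ 2 = Jind d ε l m := by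
  unfold Jind; split_ifs <;> norm_num

lemma cutNorm_mem_of_Jind_ne_zero (h : Jind d ε l m ≠ 0) :
    ε * cutNorm d l ∈ Set.Ioc 0 1 ∧ ε * cutNorm d m ∈ Set.Ioc 0 1 ∧
      ε * cutNorm d (l + m) ∈ Set.Ioc 0 1 := by
  have h := of_not_not fun h' => h (if_neg h')
  exact ⟨⟨h.1, h.2.1⟩, ⟨h.2.2.1, h.2.2.2.1⟩, h.2.2.2.2⟩

lemma ne_zero_of_cutNorm_mem (h : ε * cutNorm d l ∈ Set.Ioc 0 1) : l ≠ 0 := by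
  rintro rfl
  simp [cutNorm_zero] at h

lemma mem_Icc_of_cutNorm_mem (hε : 0 < ε) (h : ε * cutNorm d l ∈ Set.Ioc 0 1) :
    l ∈ Finset.Icc (-⌊ε⁻¹⌋₊ : ZLat d) ⌊ε⁻¹⌋₊ := by
  have natAbs_le (i : Fin d) : (l i).natAbs ≤ ⌊ε⁻¹⌋₊ := by
    refine Nat.le_floor ?_
    rw [Nat.cast_natAbs, Int.cast_abs, ← one_div, le_div_iff₀' hε]
    exact (mul_le_mul_of_nonneg_left (abs_apply_le_cutNorm l i) hε.le).trans h.2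
  refine Finset.mem_Icc.2 ⟨fun i => ?_, fun i => ?_⟩ <;>
  · have := natAbs_le i
    simp only [Pi.neg_apply, Pi.natCast_apply]
    omega

lemma two_mul_sq_le_one_of_Jind_ne_zero {l m : ZLat 2} (h : Jind 2 ε l m ≠ 0) :
    2 * ε ^ 2 ≤ 1 := by
  have of_two_le_nsq {p : ZLat 2} (hp : ε * cutNorm 2 p ∈ Set.Ioc 0 1) (hp₂ : 2 ≤ nsq p) :
      2 * ε ^ 2 ≤ 1 :=
    calc 2 * ε ^ 2 ≤ nsq p * ε ^ 2 := by gcongr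
      _ = (ε * cutNorm 2 p) ^ 2 := by
        rw [cutNorm, if_pos rfl, eN, mul_pow, Real.sq_sqrt (nsq_nonneg p), mul_comm]
      _ ≤ 1 := pow_le_one₀ hp.1.le hp.2
  obtain ⟨hl, hm, hlm⟩ := cutNorm_mem_of_Jind_ne_zero h
  obtain h₂ | h₂ | h₂ := two_le_nsq_or (ne_zero_of_cutNorm_mem hl) (ne_zero_of_cutNorm_mem hm)
    (ne_zero_of_cutNorm_mem hlm)
  · exact of_two_le_nsq hl h₂
  · exact of_two_le_nsq hm h₂
  · exact of_two_le_nsq hlm h₂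

end Cutoff

section OneParticle

open Finset

variable {d : ℕ} {ε : ℝ}

lemma lam_two_sq_mul_sum_le (hε : 0 < ε) (hε₂ : 2 * ε ^ 2 ≤ 1) :
    lam 2 ε ^ 2 * ∑ k ∈ range ⌊ε⁻¹⌋₊, ((k : ℝ) + 1) ^ (2 - 1) / ((k : ℝ) + 1) ^ 2 ≤
      1 + 1 / Real.log 2 := by
  have log_two_pos : 0 < Real.log 2 := Real.log_pos one_lt_two
  have log_two_le : Real.log 2 ≤ Real.log (1 / ε ^ 2) :=
    Real.log_le_log two_pos ((le_div_iff₀ (by positivity)).2 hε₂)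
  have log_floor_le : Real.log ⌊ε⁻¹⌋₊ ≤ Real.log (1 / ε ^ 2) := by
    have one_le_inv : 1 ≤ ε⁻¹ := (one_le_inv₀ hε).2 (by nlinarith)
    have floor_pos : 0 < ⌊ε⁻¹⌋₊ := Nat.floor_pos.2 one_le_inv
    refine Real.log_le_log (Nat.cast_pos.2 floor_pos) ?_
    calc (⌊ε⁻¹⌋₊ : ℝ) ≤ ε⁻¹ := Nat.floor_le (by positivity)
      _ ≤ ε⁻¹ ^ 2 := le_self_pow₀ one_le_inv two_ne_zero
      _ = 1 / ε ^ 2 := by rw [inv_pow, one_div]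
  have sum_le : ∑ k ∈ range ⌊ε⁻¹⌋₊, ((k : ℝ) + 1) ^ (2 - 1) / ((k : ℝ) + 1) ^ 2 ≤
      1 + Real.log (1 / ε ^ 2) := by
    calc ∑ k ∈ range ⌊ε⁻¹⌋₊, ((k : ℝ) + 1) ^ (2 - 1) / ((k : ℝ) + 1) ^ 2
        = (harmonic ⌊ε⁻¹⌋₊ : ℝ) := by
          push_cast [harmonic]
          exact sum_congr rfl fun k _ => by field_simp
      _ ≤ 1 + Real.log ⌊ε⁻¹⌋₊ := harmonic_le_one_add_log _
      _ ≤ 1 + Real.log (1 / ε ^ 2) := by gcongr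
  calc lam 2 ε ^ 2 * ∑ k ∈ range ⌊ε⁻¹⌋₊, ((k : ℝ) + 1) ^ (2 - 1) / ((k : ℝ) + 1) ^ 2
      ≤ (Real.log (1 / ε ^ 2))⁻¹ * (1 + Real.log (1 / ε ^ 2)) := by
        rw [lam, if_pos rfl, inv_pow, Real.sq_sqrt (by linarith)]
        exact mul_le_mul_of_nonneg_left sum_le (inv_nonneg.2 (by linarith))
    _ = 1 + 1 / Real.log (1 / ε ^ 2) := by
        have : Real.log (1 / ε ^ 2) ≠ 0 := by linarith
        field_simp
        ring
    _ ≤ 1 + 1 / Real.log 2 := by gcongr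

lemma lam_sq_mul_sum_le_one (hd : 3 ≤ d) (hε : 0 < ε) :
    lam d ε ^ 2 * ∑ k ∈ range ⌊ε⁻¹⌋₊, ((k : ℝ) + 1) ^ (d - 1) / ((k : ℝ) + 1) ^ 2 ≤ 1 := by
  obtain ⟨m, rfl⟩ := Nat.exists_eq_add_of_le' hd
  have floor_le : (⌊ε⁻¹⌋₊ : ℝ) ≤ ε⁻¹ := Nat.floor_le (by positivity)
  have lam_sq : lam (m + 3) ε ^ 2 = ε ^ (m + 1) := by
    rw [lam, if_neg (by omega), ← Real.rpow_natCast, ← Real.rpow_mul hε.le, ← Real.rpow_natCast]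
    congr 1
    push_cast
    ring
  have term_le {k : ℕ} (hk : k ∈ range ⌊ε⁻¹⌋₊) :
      ((k : ℝ) + 1) ^ (m + 3 - 1) / ((k : ℝ) + 1) ^ 2 ≤ ε⁻¹ ^ m := by
    calc ((k : ℝ) + 1) ^ (m + 3 - 1) / ((k : ℝ) + 1) ^ 2 = ((k : ℝ) + 1) ^ m := by
          rw [show m + 3 - 1 = m + 2 by omega, pow_add]
          field_simp
      _ ≤ ε⁻¹ ^ m := by
          gcongr
          exact le_trans (mod_cast mem_range.1 hk) floor_le
  calc lam (m + 3) ε ^ 2 * ∑ k ∈ range ⌊ε⁻¹⌋₊, ((k : ℝ) + 1) ^ (m + 3 - 1) / ((k : ℝ) + 1) ^ 2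
      ≤ ε ^ (m + 1) * (⌊ε⁻¹⌋₊ * ε⁻¹ ^ m) := by
        rw [lam_sq]
        gcongr
        simpa using sum_le_sum fun k hk => term_le hk
    _ ≤ ε ^ (m + 1) * (ε⁻¹ * ε⁻¹ ^ m) := by gcongr
    _ = 1 := by rw [← pow_succ', ← mul_pow, mul_inv_cancel₀ hε.ne', one_pow]

/-- The weight `λ_ε² J^ε_{ℓ,m} / (|ℓ|² + |m|²)` with which the merging of the frequencies `ℓ` and
`m` enters the estimate of `A⁺_ε`. -/
def cutKernel (d : ℕ) (ε : ℝ) (l m : ZLat d) : ℝ :=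
  lam d ε ^ 2 * (Jind d ε l m / (nsq l + nsq m))

/-- The bound for the sum of `cutKernel` over `ℓ + m = q`, uniform in `ε` and `q`. -/
def cutKernelBound (d : ℕ) : ℝ := 2 * d * 3 ^ (d - 1) * (1 + 1 / Real.log 2)

lemma cutKernelBound_pos (hd : d ≠ 0) : 0 < cutKernelBound d := by
  have := Real.log_pos one_lt_two
  unfold cutKernelBound
  positivity

lemma cutKernel_nonneg (d : ℕ) (ε : ℝ) (l m : ZLat d) : 0 ≤ cutKernel d ε l m :=
  mul_nonneg (sq_nonneg _)
    (div_nonneg (Jind_nonneg d ε l m) (add_nonneg (nsq_nonneg l) (nsq_nonneg m)))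

lemma cutKernel_eq_zero {l m : ZLat d} (hJ : Jind d ε l m = 0) : cutKernel d ε l m = 0 := by
  rw [cutKernel, hJ, zero_div, mul_zero]

lemma cutKernel_eq_zero_of_notMem_Icc (hε : 0 < ε) (m : ZLat d) {l : ZLat d}
    (hl : l ∉ Icc (-⌊ε⁻¹⌋₊ : ZLat d) ⌊ε⁻¹⌋₊) : cutKernel d ε l m = 0 :=
  cutKernel_eq_zero <| of_not_not fun hJ =>
    hl (mem_Icc_of_cutNorm_mem hε (cutNorm_mem_of_Jind_ne_zero hJ).1)

lemma cutKernel_le (l m : ZLat d) : cutKernel d ε l m ≤ lam d ε ^ 2 * (nsq l)⁻¹ := by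
  by_cases hJ : Jind d ε l m = 0
  · rw [cutKernel_eq_zero hJ]
    exact mul_nonneg (sq_nonneg _) (inv_nonneg.2 (nsq_nonneg l))
  have hl := nsq_pos (ne_zero_of_cutNorm_mem (cutNorm_mem_of_Jind_ne_zero hJ).1)
  rw [cutKernel, ← one_div]
  gcongr
  · exact Jind_le_one d ε l m
  · exact le_add_of_nonneg_right (nsq_nonneg m)

lemma add_mul_cutKernel (ε : ℝ) (l m : ZLat d) :
    (nsq l + nsq m) * cutKernel d ε l m = lam d ε ^ 2 * Jind d ε l m := by
  by_cases hJ : Jind d ε l m = 0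
  · rw [cutKernel_eq_zero hJ, hJ, mul_zero, mul_zero]
  have hl := nsq_pos (ne_zero_of_cutNorm_mem (cutNorm_mem_of_Jind_ne_zero hJ).1)
  have hlm : nsq l + nsq m ≠ 0 := (add_pos_of_pos_of_nonneg hl (nsq_nonneg m)).ne'
  rw [cutKernel, mul_left_comm, mul_div_cancel₀ _ hlm]

lemma summable_cutKernel (hε : 0 < ε) (q : ZLat d) :
    Summable fun l => cutKernel d ε l (q - l) :=
  summable_of_ne_finset_zero fun l hl => cutKernel_eq_zero_of_notMem_Icc hε (q - l) hl

lemma lam_sq_mul_sum_le (hd : 2 ≤ d) (hε : 0 < ε) {l m : ZLat d} (hJ : Jind d ε l m ≠ 0) :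
    lam d ε ^ 2 * ∑ k ∈ range ⌊ε⁻¹⌋₊, ((k : ℝ) + 1) ^ (d - 1) / ((k : ℝ) + 1) ^ 2 ≤
      1 + 1 / Real.log 2 := by
  obtain rfl | hd₃ := hd.eq_or_lt
  · exact lam_two_sq_mul_sum_le hε (two_mul_sq_le_one_of_Jind_ne_zero hJ)
  · have : 0 < 1 / Real.log 2 := one_div_pos.2 (Real.log_pos one_lt_two)
    exact (lam_sq_mul_sum_le_one hd₃ hε).trans (by linarith)

lemma tsum_cutKernel_le (hd : 2 ≤ d) (hε : 0 < ε) (q : ZLat d) :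
    ∑' l, cutKernel d ε l (q - l) ≤ cutKernelBound d := by
  by_cases hJ : ∀ l, Jind d ε l (q - l) = 0
  · simpa only [fun l => cutKernel_eq_zero (hJ l), tsum_zero] using
      (cutKernelBound_pos (by omega : d ≠ 0)).le
  obtain ⟨l₀, hl₀⟩ := not_forall.1 hJ
  set S := ∑ k ∈ range ⌊ε⁻¹⌋₊, ((k : ℝ) + 1) ^ (d - 1) / ((k : ℝ) + 1) ^ 2
  calc ∑' l, cutKernel d ε l (q - l)
      = ∑ l ∈ Icc (-⌊ε⁻¹⌋₊ : ZLat d) ⌊ε⁻¹⌋₊, cutKernel d ε l (q - l) :=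
        tsum_eq_sum fun l hl => cutKernel_eq_zero_of_notMem_Icc hε (q - l) hl
    _ ≤ lam d ε ^ 2 * ∑ l ∈ Icc (-⌊ε⁻¹⌋₊ : ZLat d) ⌊ε⁻¹⌋₊, (nsq l)⁻¹ := by
        rw [mul_sum]
        exact sum_le_sum fun l _ => cutKernel_le l (q - l)
    _ ≤ lam d ε ^ 2 * (2 * d * 3 ^ (d - 1) * S) := by
        gcongr
        exact sum_Icc_inv_nsq_le d _
    _ = 2 * d * 3 ^ (d - 1) * (lam d ε ^ 2 * S) := by ring
    _ ≤ cutKernelBound d := by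
        unfold cutKernelBound
        gcongr
        exact lam_sq_mul_sum_le hd hε hl₀

end OneParticle

section OrderedPair

open Finset

/-- The pairs `i < j` of indices, over which the sum defining `A⁺_ε` runs. -/
abbrev OrderedPair (n : ℕ) := {x : Fin n × Fin n // x.1 < x.2}

lemma sum_sum_dite_lt {n : ℕ} {M : Type*} [AddCommMonoid M] (F : ∀ i j : Fin n, i < j → M) :
    ∑ i, ∑ j, (if h : i < j then F i j h else 0) = ∑ x : OrderedPair n, F x.1.1 x.1.2 x.2 := by
  rw [← Fintype.sum_prod_type' (f := fun i j => if h : i < j then F i j h else 0)]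
  refine (Fintype.sum_of_injective Subtype.val Subtype.val_injective _ _ (fun x hx => ?_)
    fun x => (dif_pos x.2).symm).symm
  exact dif_neg fun h => hx ⟨⟨x, h⟩, rfl⟩

lemma sum_orderedPair_add (n : ℕ) (a : Fin (n + 1) → ℝ) :
    ∑ x : OrderedPair (n + 1), (a x.1.1 + a x.1.2) = n * ∑ i, a i := by
  have card_Ioi_add_card_Iio (i : Fin (n + 1)) : (#(Ioi i) + #(Iio i) : ℝ) = n := by
    rw [Fin.card_Ioi, Fin.card_Iio]
    norm_cast
    omega
  calc ∑ x : OrderedPair (n + 1), (a x.1.1 + a x.1.2)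
      = ∑ i, ∑ j, (if i < j then a i else 0) + ∑ i, ∑ j, (if i < j then a j else 0) := by
        rw [sum_add_distrib, ← sum_sum_dite_lt fun i _ _ => a i, ← sum_sum_dite_lt fun _ j _ => a j]
        simp only [dite_eq_ite]
    _ = ∑ i, ∑ j, (if i < j then a i else 0) + ∑ i, ∑ j, (if j < i then a i else 0) := by
        rw [sum_comm (f := fun i j => if i < j then a j else 0)]
    _ = n * ∑ i, a i := by
        rw [← sum_add_distrib, mul_sum]
        refine sum_congr rfl fun i _ => ?_
        rw [← sum_filter, ← sum_filter, filter_lt_eq_Ioi, filter_gt_eq_Iio, sum_const, sum_const,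
          nsmul_eq_mul, nsmul_eq_mul, ← add_mul, card_Ioi_add_card_Iio]

lemma card_orderedPair (n : ℕ) : (Fintype.card (OrderedPair (n + 1)) : ℝ) = n * (n + 1) / 2 := by
  have h := sum_orderedPair_add n fun _ => 1 / 2
  simp only [add_halves, sum_const, card_univ, nsmul_eq_mul, mul_one, Fintype.card_fin] at h
  rw [h]
  push_cast
  ring

variable {d n : ℕ}

/-- The frequencies `(k_i + k_j, k_{{1:n+2}∖{i,j}})` at which `A⁺_ε ψ (k)` evaluates `ψ`. -/
def merge (x : OrderedPair (n + 2)) (k : Fin (n + 2) → ZLat d) : Fin (n + 1) → ZLat d :=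
  Fin.cons (k x.1.1 + k x.1.2) (remove2 k x.1.1 x.1.2 x.2)

lemma merge_zero (x : OrderedPair (n + 2)) (k : Fin (n + 2) → ZLat d) :
    merge x k 0 = k x.1.1 + k x.1.2 := rfl

lemma insertNth_insertNth_remove2 {X : Type*} (k : Fin (n + 2) → X) {i j : Fin (n + 2)}
    (h : i < j) :
    j.insertNth (α := fun _ => X) (k j)
      ((i.castPred (Fin.ne_last_of_lt h)).insertNth (α := fun _ => X) (k i) (remove2 k i j h)) =
      k := by
  rw [Fin.insertNth_eq_iff, Fin.insertNth_eq_iff]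
  refine ⟨rfl, ?_, rfl⟩
  rw [Fin.removeNth, Fin.succAbove_castPred_of_lt _ _ h]

lemma merge_prodMk_injective (x : OrderedPair (n + 2)) :
    Function.Injective fun k : Fin (n + 2) → ZLat d => (merge x k, k x.1.1) := by
  obtain ⟨⟨i, j⟩, h⟩ := x
  intro k k' hk
  obtain ⟨hmerge, hi : k i = k' i⟩ := Prod.mk.inj hk
  obtain ⟨hsum, hrest⟩ := Fin.cons_inj.1 hmerge
  have hj : k j = k' j := by simpa [hi] using hsum
  rw [← insertNth_insertNth_remove2 k h, ← insertNth_insertNth_remove2 k' h, hi, hj, hrest]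

end OrderedPair

section FockNorm

variable {d n : ℕ}

lemma wSq_nonneg (k : Fin n → ZLat d) : 0 ≤ wSq k := Finset.sum_nonneg fun _ _ => nsq_nonneg _

lemma sobTerm_nonneg (s : ℝ) (f : Chaos d n) (k : Fin n → ZLat d) : 0 ≤ sobTerm s f k :=
  mul_nonneg (Real.rpow_nonneg (div_nonneg (wSq_nonneg k) zero_le_two) _) (sq_nonneg _)

lemma sobTerm_half (f : Chaos d n) (k : Fin n → ZLat d) :
    sobTerm (1 / 2) f k = wSq k / 2 * ‖f k‖ ^ 2 := by
  rw [sobTerm, mul_one_div_cancel two_ne_zero, Real.rpow_one]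

lemma sobTerm_neg_half (f : Chaos d n) (k : Fin n → ZLat d) :
    sobTerm (-(1 / 2)) f k = (wSq k / 2)⁻¹ * ‖f k‖ ^ 2 := by
  rw [sobTerm, mul_neg, mul_one_div_cancel two_ne_zero, Real.rpow_neg_one]

lemma summable_nsq_mul_norm_sq {f : Chaos d n} (hf : Summable (sobTerm (1 / 2) f)) (a : Fin n) :
    Summable fun p : Fin n → ZLat d => nsq (p a) * ‖f p‖ ^ 2 := by
  refine (hf.mul_left 2).of_nonneg_of_le (fun p => mul_nonneg (nsq_nonneg _) (sq_nonneg _))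
    fun p => ?_
  have nsq_le : nsq (p a) ≤ wSq p :=
    Finset.single_le_sum (f := fun a => nsq (p a)) (fun _ _ => nsq_nonneg _) (Finset.mem_univ a)
  rw [sobTerm_half, ← mul_assoc, mul_div_cancel₀ _ two_ne_zero]
  gcongr

lemma tsum_nsq_mul_norm_sq_eq {f : Chaos d n} (hsymm : Symm f) (a b : Fin n) :
    ∑' p : Fin n → ZLat d, nsq (p a) * ‖f p‖ ^ 2 = ∑' p, nsq (p b) * ‖f p‖ ^ 2 := by
  rw [← (Equiv.arrowCongr (Equiv.swap a b) (Equiv.refl (ZLat d))).tsum_eq]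
  refine tsum_congr fun p => ?_
  change nsq (p (Equiv.swap a b a)) * ‖f (p ∘ Equiv.swap a b)‖ ^ 2 = _
  rw [Equiv.swap_apply_left, hsymm]

lemma mul_tsum_nsq_mul_norm_sq {f : Chaos d n} (hsymm : Symm f)
    (hf : Summable (sobTerm (1 / 2) f)) (a : Fin n) :
    n * ∑' p : Fin n → ZLat d, nsq (p a) * ‖f p‖ ^ 2 = 2 * ∑' p, sobTerm (1 / 2) f p := by
  have sum_eq (p : Fin n → ZLat d) :
      2 * sobTerm (1 / 2) f p = ∑ b, nsq (p b) * ‖f p‖ ^ 2 := by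
    rw [sobTerm_half, ← mul_assoc, mul_div_cancel₀ _ two_ne_zero, wSq, Finset.sum_mul]
  calc n * ∑' p : Fin n → ZLat d, nsq (p a) * ‖f p‖ ^ 2
      = ∑ b, ∑' p : Fin n → ZLat d, nsq (p b) * ‖f p‖ ^ 2 := by
        simp only [fun b => tsum_nsq_mul_norm_sq_eq hsymm b a, Finset.sum_const, Finset.card_univ,
          Fintype.card_fin, nsmul_eq_mul]
    _ = ∑' p, 2 * sobTerm (1 / 2) f p := by
        rw [← Summable.tsum_finsetSum fun b _ => summable_nsq_mul_norm_sq hf b]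
        exact tsum_congr fun p => (sum_eq p).symm
    _ = 2 * ∑' p, sobTerm (1 / 2) f p := tsum_mul_left

end FockNorm

section SectorBound

variable {d n : ℕ} {ε : ℝ}

/-- The weighted square `|q|² |f(p)|² λ_ε² J^ε_{ℓ,q-ℓ} / (|ℓ|² + |q-ℓ|²)`, where `q` is the first
entry of `p`, left over by the Cauchy–Schwarz inequality from the term of `A⁺_ε f` that merges `ℓ`
and `q - ℓ` into `q`; here `z = (p, ℓ)`. -/
def pairDensity (ε : ℝ) (f : Chaos d (n + 1)) (z : (Fin (n + 1) → ZLat d) × ZLat d) : ℝ :=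
  nsq (z.1 0) * ‖f z.1‖ ^ 2 * cutKernel d ε z.2 (z.1 0 - z.2)

lemma pairDensity_nonneg (ε : ℝ) (f : Chaos d (n + 1)) : 0 ≤ pairDensity ε f := fun _ =>
  mul_nonneg (mul_nonneg (nsq_nonneg _) (sq_nonneg _)) (cutKernel_nonneg _ _ _ _)

lemma pairDensity_merge (ε : ℝ) (f : Chaos d (n + 1)) (x : OrderedPair (n + 2))
    (k : Fin (n + 2) → ZLat d) :
    pairDensity ε f (merge x k, k x.1.1) =
      nsq (k x.1.1 + k x.1.2) * ‖f (merge x k)‖ ^ 2 * cutKernel d ε (k x.1.1) (k x.1.2) := by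
  simp only [pairDensity, merge_zero, add_sub_cancel_left]

lemma tsum_pairDensity_right_le (hd : 2 ≤ d) (hε : 0 < ε) (f : Chaos d (n + 1))
    (p : Fin (n + 1) → ZLat d) :
    ∑' l, pairDensity ε f (p, l) ≤ nsq (p 0) * ‖f p‖ ^ 2 * cutKernelBound d := by
  have hp := nsq_nonneg (p 0)
  calc ∑' l, pairDensity ε f (p, l)
      = nsq (p 0) * ‖f p‖ ^ 2 * ∑' l, cutKernel d ε l (p 0 - l) := by
        simp only [pairDensity, tsum_mul_left]
    _ ≤ nsq (p 0) * ‖f p‖ ^ 2 * cutKernelBound d := by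
        gcongr
        exact tsum_cutKernel_le hd hε (p 0)

lemma summable_pairDensity (hd : 2 ≤ d) (hε : 0 < ε) {f : Chaos d (n + 1)}
    (hf : Summable (sobTerm (1 / 2) f)) : Summable (pairDensity ε f) := by
  refine (summable_prod_of_nonneg (pairDensity_nonneg ε f)).2
    ⟨fun p => (summable_cutKernel hε (p 0)).mul_left (nsq (p 0) * ‖f p‖ ^ 2), ?_⟩
  exact ((summable_nsq_mul_norm_sq hf 0).mul_right (cutKernelBound d)).of_nonneg_of_le
    (fun p => tsum_nonneg fun l => pairDensity_nonneg ε f (p, l))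
    (tsum_pairDensity_right_le hd hε f)

lemma mul_tsum_pairDensity_le (hd : 2 ≤ d) (hε : 0 < ε) {f : Chaos d (n + 1)} (hsymm : Symm f)
    (hf : Summable (sobTerm (1 / 2) f)) :
    (n + 1) * ∑' z, pairDensity ε f z ≤ 2 * cutKernelBound d * ∑' p, sobTerm (1 / 2) f p := by
  have hsum := summable_pairDensity hd hε hf
  have tsum_le : ∑' z, pairDensity ε f z ≤
      (∑' p : Fin (n + 1) → ZLat d, nsq (p 0) * ‖f p‖ ^ 2) * cutKernelBound d := by
    rw [hsum.tsum_prod, ← tsum_mul_right]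
    exact hsum.prod.tsum_le_tsum (tsum_pairDensity_right_le hd hε f)
      ((summable_nsq_mul_norm_sq hf 0).mul_right _)
  calc (n + 1) * ∑' z, pairDensity ε f z
      ≤ (n + 1) * ((∑' p : Fin (n + 1) → ZLat d, nsq (p 0) * ‖f p‖ ^ 2) * cutKernelBound d) := by
        gcongr
    _ = ((n + 1 : ℕ) * ∑' p : Fin (n + 1) → ZLat d, nsq (p 0) * ‖f p‖ ^ 2) *
          cutKernelBound d := by
        push_cast
        ring
    _ = 2 * cutKernelBound d * ∑' p, sobTerm (1 / 2) f p := by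
        rw [mul_tsum_nsq_mul_norm_sq hsymm hf]
        ring

lemma summable_pairDensity_merge (hd : 2 ≤ d) (hε : 0 < ε) {f : Chaos d (n + 1)}
    (hf : Summable (sobTerm (1 / 2) f)) (x : OrderedPair (n + 2)) :
    Summable fun k : Fin (n + 2) → ZLat d => pairDensity ε f (merge x k, k x.1.1) :=
  (summable_pairDensity hd hε hf).comp_injective (merge_prodMk_injective x)

lemma tsum_pairDensity_merge_le (hd : 2 ≤ d) (hε : 0 < ε) {f : Chaos d (n + 1)}
    (hf : Summable (sobTerm (1 / 2) f)) (x : OrderedPair (n + 2)) :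
    ∑' k : Fin (n + 2) → ZLat d, pairDensity ε f (merge x k, k x.1.1) ≤
      ∑' z, pairDensity ε f z :=
  tsum_comp_le_tsum_of_inj (summable_pairDensity hd hε hf) (pairDensity_nonneg ε f)
    (merge_prodMk_injective x)

lemma norm_Aplus_sq (d : ℕ) (w : Fin d → ℝ) (ε : ℝ) (f : Chaos d (n + 1))
    (k : Fin (n + 2) → ZLat d) :
    ‖Aplus d w ε f k‖ ^ 2 = 4 / (2 * Real.pi) ^ d / (n + 2) ^ 2 *
      (|lam d ε| * ‖∑ x : OrderedPair (n + 2), ((dotw w (k x.1.1 + k x.1.2) : ℝ) : ℂ) *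
        ((Jind d ε (k x.1.1) (k x.1.2) : ℝ) : ℂ) * f (merge x k)‖) ^ 2 := by
  set F : OrderedPair (n + 2) → ℂ := fun x => ((dotw w (k x.1.1 + k x.1.2) : ℝ) : ℂ) *
    ((Jind d ε (k x.1.1) (k x.1.2) : ℝ) : ℂ) * f (merge x k)
  have Aplus_eq : Aplus d w ε f k = -(2 * Complex.I / (((2 * Real.pi) ^ ((d : ℝ) / 2) : ℝ) : ℂ)) *
      ((lam d ε / ((n : ℝ) + 2) : ℝ) : ℂ) * ∑ x, F x :=
    congrArg _ (sum_sum_dite_lt fun i j h => F ⟨(i, j), h⟩)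
  have rpow_sq : ((2 * Real.pi) ^ ((d : ℝ) / 2)) ^ 2 = (2 * Real.pi) ^ d := by
    rw [← Real.rpow_mul_natCast Real.two_pi_pos.le, Nat.cast_ofNat, div_mul_cancel₀ _ two_ne_zero,
      Real.rpow_natCast]
  have norm_const_sq :
      ‖2 * Complex.I / (((2 * Real.pi) ^ ((d : ℝ) / 2) : ℝ) : ℂ)‖ ^ 2 = 4 / (2 * Real.pi) ^ d := by
    rw [norm_div, norm_mul, Complex.norm_I, Complex.norm_real, Complex.norm_ofNat, div_pow,
      Real.norm_eq_abs, sq_abs, rpow_sq]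
    norm_num
  rw [Aplus_eq, norm_mul, norm_mul, mul_pow, mul_pow, norm_neg, norm_const_sq, Complex.norm_real,
    Real.norm_eq_abs, abs_div, abs_of_pos (by positivity : (0 : ℝ) < n + 2), div_pow |lam d ε|]
  ring

lemma lam_mul_norm_sq_le_nsq_add_mul_pairDensity (w : Fin d → ℝ) (ε : ℝ) (f : Chaos d (n + 1))
    (x : OrderedPair (n + 2)) (k : Fin (n + 2) → ZLat d) :
    (|lam d ε| * ‖((dotw w (k x.1.1 + k x.1.2) : ℝ) : ℂ) *
        ((Jind d ε (k x.1.1) (k x.1.2) : ℝ) : ℂ) * f (merge x k)‖) ^ 2 ≤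
      (nsq (k x.1.1) + nsq (k x.1.2)) *
        (‖WithLp.toLp 2 w‖ ^ 2 * pairDensity ε f (merge x k, k x.1.1)) := by
  set l := k x.1.1
  set m := k x.1.2
  calc (|lam d ε| * ‖((dotw w (l + m) : ℝ) : ℂ) * ((Jind d ε l m : ℝ) : ℂ) * f (merge x k)‖) ^ 2
      = lam d ε ^ 2 * Jind d ε l m * ‖f (merge x k)‖ ^ 2 * dotw w (l + m) ^ 2 := by
        simp only [norm_mul, Complex.norm_real, Real.norm_eq_abs, mul_pow, sq_abs, Jind_sq]
        ring
    _ ≤ lam d ε ^ 2 * Jind d ε l m * ‖f (merge x k)‖ ^ 2 *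
          (‖WithLp.toLp 2 w‖ ^ 2 * nsq (l + m)) := by
        have := Jind_nonneg d ε l m
        gcongr
        exact dotw_sq_le w (l + m)
    _ = (nsq l + nsq m) *
          (‖WithLp.toLp 2 w‖ ^ 2 * pairDensity ε f (merge x k, k x.1.1)) := by
        rw [pairDensity_merge, ← add_mul_cutKernel]
        ring

lemma sobTerm_neg_half_Aplus_le (w : Fin d → ℝ) (ε : ℝ) (f : Chaos d (n + 1))
    (k : Fin (n + 2) → ZLat d) :
    sobTerm (-(1 / 2)) (Aplus d w ε f) k ≤
      8 / (2 * Real.pi) ^ d * ‖WithLp.toLp 2 w‖ ^ 2 * ((n + 1) / (n + 2) ^ 2) *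
        ∑ x : OrderedPair (n + 2), pairDensity ε f (merge x k, k x.1.1) := by
  set D := ∑ x : OrderedPair (n + 2), pairDensity ε f (merge x k, k x.1.1)
  have hD : 0 ≤ D := Finset.sum_nonneg fun x _ => pairDensity_nonneg ε f _
  set F : OrderedPair (n + 2) → ℂ := fun x => ((dotw w (k x.1.1 + k x.1.2) : ℝ) : ℂ) *
    ((Jind d ε (k x.1.1) (k x.1.2) : ℝ) : ℂ) * f (merge x k)
  have cauchy_schwarz :
      (|lam d ε| * ‖∑ x, F x‖) ^ 2 ≤ (n + 1) * wSq k * (‖WithLp.toLp 2 w‖ ^ 2 * D) :=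
    calc (|lam d ε| * ‖∑ x, F x‖) ^ 2 ≤ (∑ x, |lam d ε| * ‖F x‖) ^ 2 := by
          rw [← Finset.mul_sum]
          gcongr
          exact norm_sum_le _ _
      _ ≤ (∑ x : OrderedPair (n + 2), (nsq (k x.1.1) + nsq (k x.1.2))) *
            ∑ x : OrderedPair (n + 2),
              ‖WithLp.toLp 2 w‖ ^ 2 * pairDensity ε f (merge x k, k x.1.1) :=
          Finset.sum_sq_le_sum_mul_sum_of_sq_le_mul _
            (fun x _ => add_nonneg (nsq_nonneg _) (nsq_nonneg _))
            (fun x _ => mul_nonneg (sq_nonneg _) (pairDensity_nonneg ε f _))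
            (fun x _ => lam_mul_norm_sq_le_nsq_add_mul_pairDensity w ε f x k)
      _ = (n + 1) * wSq k * (‖WithLp.toLp 2 w‖ ^ 2 * D) := by
          rw [sum_orderedPair_add (n + 1) fun a => nsq (k a), ← Finset.mul_sum, Nat.cast_add_one,
            wSq]
  have hk := wSq_nonneg k
  calc sobTerm (-(1 / 2)) (Aplus d w ε f) k
      = (wSq k / 2)⁻¹ * (4 / (2 * Real.pi) ^ d / (n + 2) ^ 2) * (|lam d ε| * ‖∑ x, F x‖) ^ 2 := by
        rw [sobTerm_neg_half, norm_Aplus_sq, ← mul_assoc]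
    _ ≤ (wSq k / 2)⁻¹ * (4 / (2 * Real.pi) ^ d / (n + 2) ^ 2) *
          ((n + 1) * wSq k * (‖WithLp.toLp 2 w‖ ^ 2 * D)) := by gcongr
    _ = (wSq k / 2)⁻¹ * (wSq k / 2) *
          (8 / (2 * Real.pi) ^ d * ‖WithLp.toLp 2 w‖ ^ 2 * ((n + 1) / (n + 2) ^ 2) * D) := by ring
    _ ≤ 1 * (8 / (2 * Real.pi) ^ d * ‖WithLp.toLp 2 w‖ ^ 2 * ((n + 1) / (n + 2) ^ 2) * D) := by
        gcongr
        exact inv_mul_le_one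
    _ = 8 / (2 * Real.pi) ^ d * ‖WithLp.toLp 2 w‖ ^ 2 * ((n + 1) / (n + 2) ^ 2) * D := one_mul _

lemma summable_sobTerm_neg_half_Aplus (hd : 2 ≤ d) (w : Fin d → ℝ) (hε : 0 < ε)
    {f : Chaos d (n + 1)} (hf : Summable (sobTerm (1 / 2) f)) :
    Summable (sobTerm (-(1 / 2)) (Aplus d w ε f)) :=
  ((summable_sum fun x _ => summable_pairDensity_merge hd hε hf x).mul_left _).of_nonneg_of_le
    (sobTerm_nonneg _ _) (sobTerm_neg_half_Aplus_le w ε f)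

lemma tsum_sum_pairDensity_merge_le (hd : 2 ≤ d) (hε : 0 < ε) {f : Chaos d (n + 1)}
    (hf : Summable (sobTerm (1 / 2) f)) :
    ∑' k : Fin (n + 2) → ZLat d,
        ∑ x : OrderedPair (n + 2), pairDensity ε f (merge x k, k x.1.1) ≤
      (n + 1) * (n + 2) / 2 * ∑' z, pairDensity ε f z := by
  rw [Summable.tsum_finsetSum fun x _ => summable_pairDensity_merge hd hε hf x]
  refine (Finset.sum_le_card_nsmul _ _ _ fun x _ =>
    tsum_pairDensity_merge_le hd hε hf x).trans_eq ?_
  rw [nsmul_eq_mul, Finset.card_univ, card_orderedPair]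
  push_cast
  ring

lemma sobSq_neg_half_Aplus_le (hd : 2 ≤ d) (w : Fin d → ℝ) (hε : 0 < ε) {f : Chaos d (n + 1)}
    (hsymm : Symm f) (hf : Summable (sobTerm (1 / 2) f)) :
    sobSq (-(1 / 2)) (Aplus d w ε f) ≤
      8 * cutKernelBound d / (2 * Real.pi) ^ d * ‖WithLp.toLp 2 w‖ ^ 2 * (n + 1) *
        sobSq (1 / 2) f := by
  set S := ∑' p, sobTerm (1 / 2) f p
  set B := 8 / (2 * Real.pi) ^ d * ‖WithLp.toLp 2 w‖ ^ 2
  have : 0 ≤ B := by positivity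
  have tsum_le : ∑' k, sobTerm (-(1 / 2)) (Aplus d w ε f) k ≤
      B * ((n + 1) / (n + 2) ^ 2) *
        ((n + 1) * (n + 2) / 2 * ∑' z, pairDensity ε f z) := by
    refine ((summable_sobTerm_neg_half_Aplus hd w hε hf).tsum_le_tsum
      (sobTerm_neg_half_Aplus_le w ε f)
      ((summable_sum fun x _ => summable_pairDensity_merge hd hε hf x).mul_left _)).trans ?_
    rw [tsum_mul_left]
    gcongr
    exact tsum_sum_pairDensity_merge_le hd hε hf
  calc sobSq (-(1 / 2)) (Aplus d w ε f)
      ≤ (n + 2).factorial * (B * ((n + 1) / (n + 2) ^ 2) *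
          ((n + 1) * (n + 2) / 2 * ∑' z, pairDensity ε f z)) := by
        unfold sobSq
        gcongr
    _ = (n + 1).factorial * (B / 2) * (n + 1) * ((n + 1) * ∑' z, pairDensity ε f z) := by
        rw [Nat.factorial_succ (n + 1)]
        push_cast
        field_simp
        ring
    _ ≤ (n + 1).factorial * (B / 2) * (n + 1) * (2 * cutKernelBound d * S) := by
        gcongr _ * ?_
        exact mul_tsum_pairDensity_le hd hε hsymm hf
    _ = 8 * cutKernelBound d / (2 * Real.pi) ^ d * ‖WithLp.toLp 2 w‖ ^ 2 * (n + 1) *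
          sobSq (1 / 2) f := by
        simp only [B, S, sobSq]
        ring

end SectorBound

theorem stmt0_general (d : ℕ) (hd : 2 ≤ d) :
    ∃ C : ℝ, 0 < C ∧
      ∀ (w : Fin d → ℝ) (ε : ℝ), 0 < ε →
      ∀ (n : ℕ) (ψ : Chaos d (n + 1)),
        Symm ψ → Summable (sobTerm (1 / 2 : ℝ) ψ) →
        Summable (sobTerm (-(1 / 2) : ℝ) (Aplus d w ε ψ)) ∧
        Real.sqrt (sobSq (-(1 / 2) : ℝ) (Aplus d w ε ψ)) ≤
          C * ‖WithLp.toLp 2 w‖ * Real.sqrt ((n : ℝ) + 1) * Real.sqrt (sobSq (1 / 2 : ℝ) ψ) := by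
  have bound_pos : 0 < cutKernelBound d := cutKernelBound_pos (by omega)
  have const_pos : 0 < 8 * cutKernelBound d / (2 * Real.pi) ^ d := by positivity
  refine ⟨√(8 * cutKernelBound d / (2 * Real.pi) ^ d), Real.sqrt_pos.2 const_pos,
    fun w ε hε n ψ hsymm hψ => ⟨summable_sobTerm_neg_half_Aplus hd w hε hψ, ?_⟩⟩
  rw [← Real.sqrt_sq (norm_nonneg (WithLp.toLp 2 w)), ← Real.sqrt_mul (by positivity),
    ← Real.sqrt_mul (by positivity), ← Real.sqrt_mul (by positivity)]
  exact Real.sqrt_le_sqrt (sobSq_neg_half_Aplus_le hd w hε hsymm hψ)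

/-- graded sector bound, `+` case.
For `d ≥ 2` and `w ∈ ℝ^d \ {0}` there is a constant `C > 0` (independent of `ε`, `n`
and `ψ`) such that for every `ε ∈ (0,1)`, every `n ≥ 1` (here the chaos level is `n+1 ≥ 1`)
and every symmetric `ψ ∈ ΓL²_{n+1}` supported on `(ℤ^d_0)^{n+1}` with
`‖(−L₀)^{1/2}ψ‖ < ∞`, one has `‖(−L₀)^{−1/2} A⁺_ε ψ‖ ≤ C √(n+1) ‖(−L₀)^{1/2} ψ‖`. -/
theorem stmt0 (d : ℕ) (hd : 2 ≤ d) (w : Fin d → ℝ) (hw : w ≠ 0) :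
    ∃ C : ℝ, 0 < C ∧
      ∀ ε : ℝ, 0 < ε → ε < 1 →
      ∀ (n : ℕ) (ψ : Chaos d (n+1)),
        Symm ψ → SuppOk ψ → Summable (sobTerm (1/2 : ℝ) ψ) →
        Summable (sobTerm (-(1/2) : ℝ) (Aplus d w ε ψ)) ∧
        Real.sqrt (sobSq (-(1/2) : ℝ) (Aplus d w ε ψ)) ≤
          C * Real.sqrt ((n : ℝ) + 1) * Real.sqrt (sobSq (1/2 : ℝ) ψ) := by
  obtain ⟨C, hC, h⟩ := stmt0_general d hd
  exact ⟨C * ‖WithLp.toLp 2 w‖, mul_pos hC (norm_pos_iff.2 (by simpa using hw)),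
    fun ε hε _ n ψ hsymm _ => h w ε hε n ψ hsymm⟩

end SBE
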